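/- arXiv:1710.01108 — 2 statements merged into one kernel-verified Lean document; each statement's English description precedes it below -/
import Mathlib

section
/- Let x₀ be an interior point of I and let f, g, h : I → ℝ be continuous and strictly monotone. Suppose f and g are differentiable at x₀ with f'(x₀) ≠ 0 and g'(x₀) ≠ 0, and that A^[f] ≤ A^[h] ≤ A^[g]. Then h is differentiable at x₀ and h'(x₀) ≠ 0. -/
/-!
Rescaling a generator by a nonzero constant does not change its mean, so all three generators may
be taken increasing. Comparing the means of two points, `A^[f] ≤ A^[h]` says that `h ∘ f⁻¹` is
midpoint convex, hence convex by continuity, so that `p t = (h t - h x₀) / (f t - f x₀)` is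
increasing and positive off `x₀`; so is `q t = (g t - g x₀) / (h t - h x₀)`. The product `p q` tends
to `g'(x₀) / f'(x₀) ≠ 0`. Since `log p` and `log q` are both increasing, the oscillation of `log p`
is at most that of `log (p q)`, so `log p` is Cauchy at `x₀` and `p` has a positive limit there.
Multiplying this limit by `f'(x₀)` gives `h'(x₀) ≠ 0`.
-/

open Set Function Filter

/-- The quasi-arithmetic mean generated by `f` on the interval `I`,
applied to a vector `a ∈ Iⁿ`: `f⁻¹((f a₁ + ⋯ + f aₙ)/n)`, where the
inverse of `f` is taken on `I`. -/
noncomputable def qam (I : Set ℝ) (f : ℝ → ℝ) {n : ℕ} (a : Fin n → ℝ) : ℝ :=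
  Function.invFunOn f I ((∑ i, f (a i)) / n)

/-- The natural (pointwise) partial order on quasi-arithmetic means:
`A^[f] ≤ A^[g]` iff `A^[f](a) ≤ A^[g](a)` for every `n ≥ 1` and every `a ∈ Iⁿ`. -/
def qamLE (I : Set ℝ) (f g : ℝ → ℝ) : Prop :=
  ∀ n : ℕ, 1 ≤ n → ∀ a : Fin n → ℝ, (∀ i, a i ∈ I) → qam I f a ≤ qam I g a

/-- `A^[f] = A^[g]` : equality of the two quasi-arithmetic means as means. -/
def qamEQ (I : Set ℝ) (f g : ℝ → ℝ) : Prop :=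
  ∀ n : ℕ, 1 ≤ n → ∀ a : Fin n → ℝ, (∀ i, a i ∈ I) → qam I f a = qam I g a

/-- `f` is strictly monotone on `I` (strictly increasing or strictly decreasing). -/
def StrictMonoOrAntiOn (f : ℝ → ℝ) (I : Set ℝ) : Prop :=
  StrictMonoOn f I ∨ StrictAntiOn f I

open scoped Topology

section MidpointConvex

variable {E : Type*} [AddCommGroup E] [Module ℝ E]

/-- Midpoint (Jensen) convexity of `φ` on `s`, the form of convexity that can be read off from the
means of two points. -/
def MidpointConvexOn (s : Set E) (φ : E → ℝ) : Prop :=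
  ∀ x ∈ s, ∀ y ∈ s, φ (midpoint ℝ x y) ≤ midpoint ℝ (φ x) (φ y)

-- Reflect the nearer endpoint through a maximum point `w` to get `2 ψ w ≤ 0 + ψ w`.
theorem MidpointConvexOn.nonpos_on_Icc {a b : ℝ} {ψ : ℝ → ℝ} (hψ : MidpointConvexOn (Icc a b) ψ)
    (hc : ContinuousOn ψ (Icc a b)) (ha : ψ a ≤ 0) (hb : ψ b ≤ 0) {t : ℝ} (ht : t ∈ Icc a b) :
    ψ t ≤ 0 := by
  have hab : a ≤ b := ht.1.trans ht.2
  obtain ⟨w, hw, hmax⟩ := isCompact_Icc.exists_isMaxOn ⟨t, ht⟩ hc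
  have two_mul_max_le : ∀ p ∈ Icc a b, ∀ q ∈ Icc a b, p + q = 2 * w → 2 * ψ w ≤ ψ p + ψ q := by
    intro p hp q hq hpq
    have hmid : midpoint ℝ p q = w := by rw [midpoint_eq_smul_add, hpq]; simp
    have := hψ p hp q hq
    rw [hmid, midpoint_eq_smul_add, smul_eq_mul, invOf_eq_inv] at this
    linarith
  suffices ψ w ≤ 0 from (hmax ht).trans this
  rcases le_total (w - a) (b - w) with hwa | hwb
  · have hq : 2 * w - a ∈ Icc a b := ⟨by linarith [hw.1], by linarith⟩
    linarith [two_mul_max_le a (left_mem_Icc.2 hab) _ hq (by ring), isMaxOn_iff.1 hmax _ hq]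
  · have hq : 2 * w - b ∈ Icc a b := ⟨by linarith, by linarith [hw.2]⟩
    linarith [two_mul_max_le b (right_mem_Icc.2 hab) _ hq (by ring), isMaxOn_iff.1 hmax _ hq]

theorem MidpointConvexOn.comp_lineMap_sub_lineMap {s : Set E} {φ : E → ℝ}
    (hφ : MidpointConvexOn s φ) (hs : Convex ℝ s) {x y : E} (hx : x ∈ s) (hy : y ∈ s) (c d : ℝ) :
    MidpointConvexOn (Icc (0 : ℝ) 1)
      (fun t ↦ φ (AffineMap.lineMap x y t) - AffineMap.lineMap c d t) := by
  intro t ht u hu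
  have := hφ _ (hs.lineMap_mem hx hy ht) _ (hs.lineMap_mem hx hy hu)
  rw [← AffineMap.map_midpoint] at this
  beta_reduce
  rw [AffineMap.map_midpoint (AffineMap.lineMap c d)]
  simp only [midpoint_eq_smul_add, smul_eq_mul, invOf_eq_inv] at this ⊢
  linarith

theorem MidpointConvexOn.convexOn [TopologicalSpace E] [IsTopologicalAddGroup E]
    [ContinuousSMul ℝ E] {s : Set E} {φ : E → ℝ} (hφ : MidpointConvexOn s φ) (hs : Convex ℝ s)
    (hc : ContinuousOn φ s) : ConvexOn ℝ s φ := by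
  refine ⟨hs, fun x hx y hy a b ha hb hab ↦ ?_⟩
  have hψc : ContinuousOn (fun t : ℝ ↦ φ (AffineMap.lineMap x y t) -
      AffineMap.lineMap (φ x) (φ y) t) (Icc 0 1) :=
    (hc.comp AffineMap.lineMap_continuous.continuousOn fun _ ht ↦ hs.lineMap_mem hx hy ht).sub
      AffineMap.lineMap_continuous.continuousOn
  have hψ := (hφ.comp_lineMap_sub_lineMap hs hx hy (φ x) (φ y)).nonpos_on_Icc hψc
    (by simp) (by simp) (t := b) ⟨hb, by linarith⟩
  rw [← eq_sub_iff_add_eq] at hab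
  subst hab
  simpa only [AffineMap.lineMap_apply_module, sub_nonpos] using hψ

end MidpointConvex

section InverseOn

theorem invFunOn_comp_apply_of_injective {α β γ : Type*} [Nonempty α] {u : β → γ}
    (hu : Injective u) (f : α → β) (s : Set α) (b : β) :
    invFunOn (u ∘ f) s (u b) = invFunOn f s b := by
  unfold invFunOn
  congr! 4 <;> exact hu.eq_iff

theorem continuousOn_invFunOn_of_strictMonoOn {α β : Type*} [LinearOrder α] [TopologicalSpace α]
    [OrderTopology α] [LinearOrder β] [TopologicalSpace β] [OrderTopology β] [Nonempty α]
    {f : α → β} {s : Set α} (hf : StrictMonoOn f s) (hs : s.OrdConnected)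
    (hfs : (f '' s).OrdConnected) : ContinuousOn (invFunOn f s) (f '' s) := by
  rw [continuousOn_iff_continuous_domRestrict]
  refine (continuous_subtype_val.comp (hf.orderIso f s).symm.continuous).congr fun y ↦ ?_
  obtain ⟨x, rfl⟩ := (hf.orderIso f s).surjective y
  rw [comp_apply, OrderIso.symm_apply_apply]
  exact (hf.injOn.leftInvOn_invFunOn x.2).symm

end InverseOn

section QuasiArithmeticMean

variable {I : Set ℝ} {f h : ℝ → ℝ}

theorem qam_const_smul {c : ℝ} (hc : c ≠ 0) (f : ℝ → ℝ) {n : ℕ} (a : Fin n → ℝ) :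
    qam I (c • f) a = qam I f a := by
  rw [qam, qam, ← invFunOn_comp_apply_of_injective (smul_right_injective ℝ hc) f]
  simp only [Pi.smul_apply, ← Finset.smul_sum, smul_div_assoc]
  rfl

theorem qamLE.const_smul (hle : qamLE I f h) {c d : ℝ} (hc : c ≠ 0) (hd : d ≠ 0) :
    qamLE I (c • f) (d • h) := by
  intro n hn a ha
  rw [qam_const_smul hc, qam_const_smul hd]
  exact hle n hn a ha

theorem StrictMonoOrAntiOn.exists_strictMonoOn_const_smul (hf : StrictMonoOrAntiOn f I) :
    ∃ c : ℝ, c ≠ 0 ∧ StrictMonoOn (c • f) I := by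
  rcases hf with hf | hf
  · exact ⟨1, one_ne_zero, by rwa [one_smul]⟩
  · exact ⟨-1, by norm_num, by rw [neg_one_smul]; exact hf.neg⟩

theorem qam_pair (I : Set ℝ) (f : ℝ → ℝ) (x y : ℝ) :
    qam I f ![x, y] = invFunOn f I (midpoint ℝ (f x) (f y)) := by
  simp [qam, midpoint_eq_smul_add, div_eq_inv_mul]

theorem midpoint_mem_image_of_continuousOn (hI : I.OrdConnected) (hf : ContinuousOn f I) {x y : ℝ}
    (hx : x ∈ I) (hy : y ∈ I) : midpoint ℝ (f x) (f y) ∈ f '' I :=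
  (hI.isPreconnected.image f hf).ordConnected.convex.midpoint_mem
    (mem_image_of_mem f hx) (mem_image_of_mem f hy)

theorem qamLE.midpointConvexOn_comp_invFunOn (hle : qamLE I f h) (hI : I.OrdConnected)
    (hfc : ContinuousOn f I) (hhc : ContinuousOn h I) (hf : InjOn f I) (hh : MonotoneOn h I) :
    MidpointConvexOn (f '' I) (h ∘ invFunOn f I) := by
  rintro _ ⟨x, hx, rfl⟩ _ ⟨y, hy, rfl⟩
  have hfm := midpoint_mem_image_of_continuousOn hI hfc hx hy
  have hhm := midpoint_mem_image_of_continuousOn hI hhc hx hy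
  have hmeans : invFunOn f I (midpoint ℝ (f x) (f y)) ≤ invFunOn h I (midpoint ℝ (h x) (h y)) := by
    have := hle 2 one_le_two ![x, y] (by simp [Fin.forall_fin_two, hx, hy])
    rwa [qam_pair, qam_pair] at this
  calc h (invFunOn f I (midpoint ℝ (f x) (f y)))
      ≤ h (invFunOn h I (midpoint ℝ (h x) (h y))) :=
        hh (invFunOn_mem hfm) (invFunOn_mem hhm) hmeans
    _ = midpoint ℝ (h x) (h y) := invFunOn_eq hhm
    _ = midpoint ℝ (h (invFunOn f I (f x))) (h (invFunOn f I (f y))) := by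
        rw [hf.leftInvOn_invFunOn hx, hf.leftInvOn_invFunOn hy]

theorem qamLE.convexOn_comp_invFunOn (hle : qamLE I f h) (hI : I.OrdConnected)
    (hfc : ContinuousOn f I) (hhc : ContinuousOn h I) (hf : StrictMonoOn f I)
    (hh : MonotoneOn h I) : ConvexOn ℝ (f '' I) (h ∘ invFunOn f I) := by
  have hJ : (f '' I).OrdConnected := (hI.isPreconnected.image f hfc).ordConnected
  have hinv : MapsTo (invFunOn f I) (f '' I) I := fun _ hy ↦ invFunOn_mem hy
  exact (hle.midpointConvexOn_comp_invFunOn hI hfc hhc hf.injOn hh).convexOn hJ.convex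
    (hhc.comp (continuousOn_invFunOn_of_strictMonoOn hf hI hJ) hinv)

end QuasiArithmeticMean

section RelSlope

/-- The slope of `h` between `x₀` and `t` measured in the scale `f`, that is, the slope of
`h ∘ f⁻¹` between `f x₀` and `f t`. It is junk (zero) where `f t = f x₀`. -/
noncomputable def relSlope (f h : ℝ → ℝ) (x₀ t : ℝ) : ℝ :=
  (h t - h x₀) / (f t - f x₀)

variable {I : Set ℝ} {f g h : ℝ → ℝ} {x₀ t : ℝ}

theorem relSlope_id (f : ℝ → ℝ) (x₀ : ℝ) : relSlope id f x₀ = slope f x₀ := by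
  ext t
  rw [slope_def_field, relSlope, id, id]

theorem relSlope_mul_relSlope (hne : h t ≠ h x₀) :
    relSlope f h x₀ t * relSlope h g x₀ t = relSlope f g x₀ t := by
  rw [mul_comm]
  exact div_mul_div_cancel₀ (sub_ne_zero.2 hne)

theorem relSlope_eq_slope_div_slope (hne : t ≠ x₀) :
    relSlope f g x₀ t = slope g x₀ t / slope f x₀ t := by
  rw [slope_def_field, slope_def_field, relSlope, div_div_div_cancel_right₀ (sub_ne_zero.2 hne)]

theorem relSlope_pos (hf : StrictMonoOn f I) (hh : StrictMonoOn h I) (hx₀ : x₀ ∈ I)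
    (ht : t ∈ I \ {x₀}) : 0 < relSlope f h x₀ t := by
  rcases lt_or_gt_of_ne ht.2 with hlt | hgt
  · exact div_pos_of_neg_of_neg (sub_neg.2 (hh ht.1 hx₀ hlt)) (sub_neg.2 (hf ht.1 hx₀ hlt))
  · exact div_pos (sub_pos.2 (hh hx₀ ht.1 hgt)) (sub_pos.2 (hf hx₀ ht.1 hgt))

theorem monotoneOn_relSlope_of_convexOn (hf : StrictMonoOn f I)
    (hconv : ConvexOn ℝ (f '' I) (h ∘ invFunOn f I)) (hx₀ : x₀ ∈ I) :
    MonotoneOn (relSlope f h x₀) (I \ {x₀}) := by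
  intro s hs t ht hst
  have hsecant := hconv.secant_mono (mem_image_of_mem f hx₀) (mem_image_of_mem f hs.1)
    (mem_image_of_mem f ht.1) (hf.injOn.ne hs.1 hx₀ hs.2) (hf.injOn.ne ht.1 hx₀ ht.2)
    (hf.monotoneOn hs.1 ht.1 hst)
  have hinv := hf.injOn.leftInvOn_invFunOn
  simpa only [relSlope, comp_apply, hinv hx₀, hinv hs.1, hinv ht.1] using hsecant

theorem qamLE.monotoneOn_relSlope (hle : qamLE I f h) (hI : I.OrdConnected)
    (hfc : ContinuousOn f I) (hhc : ContinuousOn h I) (hf : StrictMonoOn f I)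
    (hh : MonotoneOn h I) (hx₀ : x₀ ∈ I) : MonotoneOn (relSlope f h x₀) (I \ {x₀}) :=
  monotoneOn_relSlope_of_convexOn hf (hle.convexOn_comp_invFunOn hI hfc hhc hf hh) hx₀

theorem tendsto_relSlope_of_hasDerivWithinAt {df dg : ℝ} (hfd : HasDerivWithinAt f df I x₀)
    (hgd : HasDerivWithinAt g dg I x₀) (hdf : df ≠ 0) :
    Tendsto (relSlope f g x₀) (𝓝[I \ {x₀}] x₀) (𝓝 (dg / df)) := by
  refine ((hasDerivWithinAt_iff_tendsto_slope.1 hgd).div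
    (hasDerivWithinAt_iff_tendsto_slope.1 hfd) hdf).congr' ?_
  filter_upwards [self_mem_nhdsWithin] with t ht
  exact (relSlope_eq_slope_div_slope ht.2).symm

theorem hasDerivWithinAt_of_tendsto_relSlope {df p : ℝ} (hfd : HasDerivWithinAt f df I x₀)
    (hf : InjOn f I) (hx₀ : x₀ ∈ I)
    (hp : Tendsto (relSlope f h x₀) (𝓝[I \ {x₀}] x₀) (𝓝 p)) :
    HasDerivWithinAt h (df * p) I x₀ := by
  rw [hasDerivWithinAt_iff_tendsto_slope] at hfd ⊢
  refine (hfd.mul hp).congr' ?_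
  filter_upwards [self_mem_nhdsWithin] with t ht
  rw [← relSlope_id, ← relSlope_id, relSlope_mul_relSlope (hf.ne ht.1 hx₀ ht.2)]

end RelSlope

section MonotoneFactors

variable {α : Type*} [LinearOrder α] {s : Set α} {u v : α → ℝ}

theorem dist_le_dist_add_of_monotoneOn (hu : MonotoneOn u s) (hv : MonotoneOn v s) {x y : α}
    (hx : x ∈ s) (hy : y ∈ s) : dist (u x) (u y) ≤ dist (u x + v x) (u y + v y) := by
  wlog hxy : x ≤ y generalizing x y
  · simpa only [dist_comm] using this hy hx (le_of_not_ge hxy)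
  have hu' := hu hx hy hxy
  have hv' := hv hx hy hxy
  rw [dist_comm, dist_comm (u x + v x), Real.dist_eq, Real.dist_eq,
    abs_of_nonneg (by linarith), abs_of_nonneg (by linarith)]
  linarith

variable {l : Filter α} [NeBot l]

theorem exists_tendsto_of_monotoneOn_of_tendsto_add (hs : s ∈ l) (hu : MonotoneOn u s)
    (hv : MonotoneOn v s) {c : ℝ} (huv : Tendsto (fun x ↦ u x + v x) l (𝓝 c)) :
    ∃ a, Tendsto u l (𝓝 a) := by
  have hcauchy := cauchy_map_iff'.1 huv.cauchy_map
  rw [← cauchy_map_iff_exists_tendsto, cauchy_map_iff']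
  rw [tendsto_uniformity_iff_dist_tendsto_zero] at hcauchy ⊢
  refine squeeze_zero' (Eventually.of_forall fun _ ↦ dist_nonneg) ?_ hcauchy
  filter_upwards [prod_mem_prod hs hs] with p hp
  exact dist_le_dist_add_of_monotoneOn hu hv hp.1 hp.2

theorem exists_pos_tendsto_of_monotoneOn_of_tendsto_mul (hs : s ∈ l) (hu : MonotoneOn u s)
    (hv : MonotoneOn v s) (hu₀ : ∀ x ∈ s, 0 < u x) (hv₀ : ∀ x ∈ s, 0 < v x) {c : ℝ} (hc : c ≠ 0)
    (huv : Tendsto (fun x ↦ u x * v x) l (𝓝 c)) : ∃ a > 0, Tendsto u l (𝓝 a) := by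
  have monotoneOn_log {w : α → ℝ} (hw : MonotoneOn w s) (hw₀ : ∀ x ∈ s, 0 < w x) :
      MonotoneOn (fun x ↦ Real.log (w x)) s :=
    fun x hx y hy hxy ↦ Real.log_le_log (hw₀ x hx) (hw hx hy hxy)
  have hlog : Tendsto (fun x ↦ Real.log (u x) + Real.log (v x)) l (𝓝 (Real.log c)) := by
    refine (huv.log hc).congr' ?_
    filter_upwards [hs] with x hx
    exact Real.log_mul (hu₀ x hx).ne' (hv₀ x hx).ne'
  obtain ⟨a, ha⟩ := exists_tendsto_of_monotoneOn_of_tendsto_add hs (monotoneOn_log hu hu₀)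
    (monotoneOn_log hv hv₀) hlog
  refine ⟨Real.exp a, Real.exp_pos a, ha.rexp.congr' ?_⟩
  filter_upwards [hs] with x hx
  exact Real.exp_log (hu₀ x hx)

end MonotoneFactors

theorem neBot_nhdsWithin_diff_singleton {X : Type*} [TopologicalSpace X] [T1Space X] {s : Set X}
    (hs : IsPreconnected s) (hs' : s.Nontrivial) {x : X} (hx : x ∈ s) : (𝓝[s \ {x}] x).NeBot :=
  accPt_principal_iff_nhdsWithin.1 (hs.preperfect_of_nontrivial hs' x hx)

theorem exists_hasDerivWithinAt_ne_zero_of_strictMonoOn {I : Set ℝ} (hI : I.OrdConnected)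
    (hI' : I.Nontrivial) {x₀ : ℝ} (hx₀ : x₀ ∈ I) {f g h : ℝ → ℝ}
    (hfc : ContinuousOn f I) (hgc : ContinuousOn g I) (hhc : ContinuousOn h I)
    (hf : StrictMonoOn f I) (hg : StrictMonoOn g I) (hh : StrictMonoOn h I)
    {df : ℝ} (hdf : df ≠ 0) (hfd : HasDerivWithinAt f df I x₀)
    {dg : ℝ} (hdg : dg ≠ 0) (hgd : HasDerivWithinAt g dg I x₀)
    (hfh : qamLE I f h) (hhg : qamLE I h g) :
    ∃ d : ℝ, d ≠ 0 ∧ HasDerivWithinAt h d I x₀ := by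
  have := neBot_nhdsWithin_diff_singleton hI.isPreconnected hI' hx₀
  have hmul : Tendsto (fun t ↦ relSlope f h x₀ t * relSlope h g x₀ t) (𝓝[I \ {x₀}] x₀)
      (𝓝 (dg / df)) := by
    refine (tendsto_relSlope_of_hasDerivWithinAt hfd hgd hdf).congr' ?_
    filter_upwards [self_mem_nhdsWithin] with t ht
    exact (relSlope_mul_relSlope (hh.injOn.ne ht.1 hx₀ ht.2)).symm
  obtain ⟨p, hp, hlim⟩ := exists_pos_tendsto_of_monotoneOn_of_tendsto_mul self_mem_nhdsWithin
    (hfh.monotoneOn_relSlope hI hfc hhc hf hh.monotoneOn hx₀)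
    (hhg.monotoneOn_relSlope hI hhc hgc hh hg.monotoneOn hx₀)
    (fun _ ↦ relSlope_pos hf hh hx₀) (fun _ ↦ relSlope_pos hh hg hx₀) (div_ne_zero hdg hdf) hmul
  exact ⟨df * p, mul_ne_zero hdf hp.ne',
    hasDerivWithinAt_of_tendsto_relSlope hfd hf.injOn hx₀ hlim⟩

theorem deriv_nonzero_interval_type_general {I : Set ℝ} (hI : I.OrdConnected) (hI' : I.Nontrivial)
    {x₀ : ℝ} (hx₀ : x₀ ∈ I) {f g h : ℝ → ℝ}
    (hfc : ContinuousOn f I) (hgc : ContinuousOn g I) (hhc : ContinuousOn h I)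
    (hfm : StrictMonoOrAntiOn f I) (hgm : StrictMonoOrAntiOn g I) (hhm : StrictMonoOrAntiOn h I)
    {df : ℝ} (hdf : df ≠ 0) (hfd : HasDerivWithinAt f df I x₀)
    {dg : ℝ} (hdg : dg ≠ 0) (hgd : HasDerivWithinAt g dg I x₀)
    (hfh : qamLE I f h) (hhg : qamLE I h g) :
    ∃ d : ℝ, d ≠ 0 ∧ HasDerivWithinAt h d I x₀ := by
  obtain ⟨a, ha, hf⟩ := hfm.exists_strictMonoOn_const_smul
  obtain ⟨b, hb, hg⟩ := hgm.exists_strictMonoOn_const_smul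
  obtain ⟨c, hc, hh⟩ := hhm.exists_strictMonoOn_const_smul
  obtain ⟨d, hd, hder⟩ := exists_hasDerivWithinAt_ne_zero_of_strictMonoOn hI hI' hx₀
    (hfc.const_smul a) (hgc.const_smul b) (hhc.const_smul c) hf hg hh
    (smul_ne_zero ha hdf) (hfd.const_smul a) (smul_ne_zero hb hdg) (hgd.const_smul b)
    (hfh.const_smul ha hc) (hhg.const_smul hc hb)
  refine ⟨c⁻¹ • d, smul_ne_zero (inv_ne_zero hc) hd, ?_⟩
  simpa only [inv_smul_smul₀ hc] using hder.const_smul c⁻¹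

/-- Theorem 3: if `f, g` are differentiable at an interior point `x₀`
with nonzero derivatives and `A^[f] ≤ A^[h] ≤ A^[g]`, then `h` is differentiable at
`x₀` with nonzero derivative. -/
theorem deriv_nonzero_interval_type
    (I : Set ℝ) (hI : I.OrdConnected) (hInontriv : ∃ x ∈ I, ∃ y ∈ I, x < y)
    (x₀ : ℝ) (hx₀ : x₀ ∈ interior I)
    (f g h : ℝ → ℝ)
    (hfc : ContinuousOn f I) (hgc : ContinuousOn g I) (hhc : ContinuousOn h I)
    (hfm : StrictMonoOrAntiOn f I) (hgm : StrictMonoOrAntiOn g I)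
    (hhm : StrictMonoOrAntiOn h I)
    (df : ℝ) (hdf : df ≠ 0) (hfd : HasDerivWithinAt f df I x₀)
    (dg : ℝ) (hdg : dg ≠ 0) (hgd : HasDerivWithinAt g dg I x₀)
    (hle₁ : qamLE I f h) (hle₂ : qamLE I h g) :
    ∃ d : ℝ, d ≠ 0 ∧ HasDerivWithinAt h d I x₀ := by
  obtain ⟨x, hx, y, hy, hxy⟩ := hInontriv
  exact deriv_nonzero_interval_type_general hI ⟨x, hx, y, hy, hxy.ne⟩ (interior_subset hx₀)
    hfc hgc hhc hfm hgm hhm hdf hfd hdg hgd hle₁ hle₂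
end

section
/- Let x₀ be an interior point of I and let g, h : I → ℝ be continuous and strictly monotone. If g and h are right-differentiable at x₀ with g'₊(x₀) = 0 and h'₊(x₀) ≠ 0, then A^[g] and A^[h] are not comparable: neither A^[g] ≤ A^[h] nor A^[h] ≤ A^[g] holds. (The analogous statement holds for left-sided derivatives.) -/
/-!
Negating a generator does not change its mean, so let `g` and `h` be increasing. If
`A^[g] ≤ A^[h]`, then `h x - h x₀` and `g x - g x₀` are of the same order as `x → x₀⁺`, a relation
symmetric in `g` and `h`; it would force `h'₊(x₀) = 0` as soon as `g'₊(x₀) = 0`.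

For `h x - h x₀ = O(g x - g x₀)`, fix `y > x₀` in `I` and compare `x` with the mean of one copy of
`y` and `n - 1` copies of `x₀`: whenever `n (g x - g x₀) ≤ g y - g x₀`, also
`n (h x - h x₀) ≤ h y - h x₀`. For `g x - g x₀ = O(h x - h x₀)`, fix `z < x₀` in `I` and compare
`x₀` with the mean of one copy of `z` and `n` copies of `x`: whenever
`n (h x - h x₀) < h x₀ - h z`, also `n (g x - g x₀) < g x₀ - g z`. In both cases, taking `n` as
large as possible bounds the ratio of the increments.
-/

open Set Function Filter

open Asymptotics Topology

lemma invFunOn_comp_of_injective {α β γ : Type*} [Nonempty α] {φ : β → γ} (hφ : Injective φ)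
    (f : α → β) (s : Set α) (b : β) : invFunOn (φ ∘ f) s (φ b) = invFunOn f s b := by
  have hfiber : (fun a ↦ a ∈ s ∧ (φ ∘ f) a = φ b) = fun a ↦ a ∈ s ∧ f a = b := by
    simp only [comp_apply, hφ.eq_iff]
  unfold invFunOn
  rw [hfiber]

lemma qam_neg (I : Set ℝ) (f : ℝ → ℝ) {n : ℕ} (a : Fin n → ℝ) : qam I (-f) a = qam I f a := by
  have hmean : (∑ i, (-f) (a i)) / n = -((∑ i, f (a i)) / n) := by simp [neg_div]
  rw [qam, hmean]
  exact invFunOn_comp_of_injective neg_injective f I _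

lemma qamLE_neg_left {I : Set ℝ} {f g : ℝ → ℝ} : qamLE I (-f) g ↔ qamLE I f g := by
  simp only [qamLE, qam_neg]

lemma qamLE_neg_right {I : Set ℝ} {f g : ℝ → ℝ} : qamLE I f (-g) ↔ qamLE I f g := by
  simp only [qamLE, qam_neg]

section Interval

variable {I : Set ℝ} (hI : I.OrdConnected)
include hI

lemma sum_div_mem_image {f : ℝ → ℝ} (hf : ContinuousOn f I) {n : ℕ} (hn : 1 ≤ n) {a : Fin n → ℝ}
    (ha : ∀ i, a i ∈ I) : (∑ i, f (a i)) / n ∈ f '' I := by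
  have hconv : Convex ℝ (f '' I) := (hI.isPreconnected.image f hf).ordConnected.convex
  have hmem := hconv.sum_mem (t := Finset.univ) (w := fun _ : Fin n ↦ (n : ℝ)⁻¹)
    (fun _ _ ↦ by positivity) (by simp [show n ≠ 0 by lia])
    (fun i _ ↦ mem_image_of_mem f (ha i))
  rwa [← Finset.smul_sum, smul_eq_mul, inv_mul_eq_div] at hmem

lemma qam_mem {f : ℝ → ℝ} (hf : ContinuousOn f I) {n : ℕ} (hn : 1 ≤ n) {a : Fin n → ℝ}
    (ha : ∀ i, a i ∈ I) : qam I f a ∈ I :=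
  invFunOn_mem (sum_div_mem_image hI hf hn ha)

lemma apply_qam {f : ℝ → ℝ} (hf : ContinuousOn f I) {n : ℕ} (hn : 1 ≤ n) {a : Fin n → ℝ}
    (ha : ∀ i, a i ∈ I) : f (qam I f a) = (∑ i, f (a i)) / n :=
  invFunOn_eq (sum_div_mem_image hI hf hn ha)

lemma le_qam_iff {f : ℝ → ℝ} (hf : ContinuousOn f I) (hfm : StrictMonoOn f I) {n : ℕ} (hn : 1 ≤ n)
    {a : Fin n → ℝ} (ha : ∀ i, a i ∈ I) {c : ℝ} (hc : c ∈ I) :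
    c ≤ qam I f a ↔ n * f c ≤ ∑ i, f (a i) := by
  rw [← hfm.le_iff_le hc (qam_mem hI hf hn ha), apply_qam hI hf hn ha,
    le_div_iff₀' (by positivity)]

lemma le_qam_cons_iff {f : ℝ → ℝ} (hf : ContinuousOn f I) (hfm : StrictMonoOn f I) {c x y : ℝ}
    (hc : c ∈ I) (hx : x ∈ I) (hy : y ∈ I) (n : ℕ) :
    c ≤ qam I f (Fin.cons y fun _ : Fin n ↦ x : Fin (n + 1) → ℝ) ↔
      (n + 1) * f c ≤ f y + n * f x := by
  have hmem : ∀ i, (Fin.cons y fun _ : Fin n ↦ x : Fin (n + 1) → ℝ) i ∈ I :=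
    Fin.cases hy fun _ ↦ hx
  rw [le_qam_iff hI hf hfm n.succ_pos hmem hc]
  simp [Fin.sum_univ_succ]

lemma mul_le_add_mul_of_qamLE {g h : ℝ → ℝ} (hgc : ContinuousOn g I) (hhc : ContinuousOn h I)
    (hgm : StrictMonoOn g I) (hhm : StrictMonoOn h I) (hle : qamLE I g h) {c x y : ℝ}
    (hc : c ∈ I) (hx : x ∈ I) (hy : y ∈ I) {n : ℕ} (hg : (n + 1) * g c ≤ g y + n * g x) :
    (n + 1) * h c ≤ h y + n * h x :=
  (le_qam_cons_iff hI hhc hhm hc hx hy n).1 <|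
    ((le_qam_cons_iff hI hgc hgm hc hx hy n).2 hg).trans <|
      hle _ n.succ_pos _ (Fin.cases hy fun _ ↦ hx)

end Interval

lemma mul_le_mul_of_forall_nat_mul_lt {u v A B : ℝ} (hu : 0 < u) (huA : 2 * u ≤ A) (hv : 0 ≤ v)
    (hAB : ∀ n : ℕ, n * u < A → n * v ≤ B) : A * v ≤ 2 * B * u := by
  obtain ⟨n, hn⟩ : ∃ n : ℕ, ⌈A / u⌉₊ = n + 1 :=
    Nat.exists_eq_add_one.2 (Nat.ceil_pos.2 (div_pos (by linarith) hu))
  have hlt : n * u < A := (lt_div_iff₀ hu).1 (Nat.lt_ceil.1 (by lia))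
  have hle : A ≤ (n + 1) * u := by
    exact_mod_cast (div_le_iff₀ hu).1 (hn ▸ Nat.le_ceil (A / u))
  calc A * v ≤ 2 * (n * u) * v := by gcongr; linarith
    _ = 2 * (n * v) * u := by ring
    _ ≤ 2 * B * u := by gcongr; exact hAB n hlt

lemma isBigO_of_forall_nat_mul_lt {α : Type*} {l : Filter α} {u v : α → ℝ} {A B : ℝ} (hA : 0 < A)
    (hu : ∀ᶠ x in l, 0 < u x) (hu₀ : Tendsto u l (𝓝 0)) (hv : ∀ᶠ x in l, 0 ≤ v x)
    (hAB : ∀ᶠ x in l, ∀ n : ℕ, n * u x < A → n * v x ≤ B) : v =O[l] u := by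
  have hsmall : ∀ᶠ x in l, u x < A / 2 := hu₀.eventually_lt_const (by positivity)
  refine IsBigO.of_bound (2 * B / A) ?_
  filter_upwards [hu, hv, hAB, hsmall] with x hux hvx hABx hsx
  rw [Real.norm_of_nonneg hvx, Real.norm_of_nonneg hux.le, div_mul_eq_mul_div, le_div_iff₀' hA]
  exact mul_le_mul_of_forall_nat_mul_lt hux (by linarith) hvx hABx

lemma isBigO_sub_of_forall_nat_mul_lt {I : Set ℝ} {x₀ : ℝ} (hx₀ : x₀ ∈ I) (hright : I ∈ 𝓝[>] x₀)
    {g h : ℝ → ℝ} (hgc : ContinuousOn g I) (hgm : StrictMonoOn g I) (hhm : StrictMonoOn h I)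
    {A B : ℝ} (hA : 0 < A)
    (hAB : ∀ x ∈ I, x₀ < x → ∀ n : ℕ, n * (g x - g x₀) < A → n * (h x - h x₀) ≤ B) :
    (fun x ↦ h x - h x₀) =O[𝓝[>] x₀] fun x ↦ g x - g x₀ := by
  refine isBigO_of_forall_nat_mul_lt (B := B) hA ?_ ?_ ?_ ?_
  · filter_upwards [hright, self_mem_nhdsWithin] with x hx hxx using sub_pos.2 (hgm hx₀ hx hxx)
  · exact tendsto_sub_nhds_zero_iff.2
      ((hgc x₀ hx₀).tendsto.mono_left (nhdsWithin_le_of_mem hright))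
  · filter_upwards [hright, self_mem_nhdsWithin] with x hx hxx
      using sub_nonneg.2 (hhm hx₀ hx hxx).le
  · filter_upwards [hright, self_mem_nhdsWithin] with x hx hxx using hAB x hx hxx

section Comparison

variable {I : Set ℝ} (hI : I.OrdConnected) {x₀ : ℝ} (hx₀ : x₀ ∈ I) (hright : I ∈ 𝓝[>] x₀)
  {g h : ℝ → ℝ} (hgc : ContinuousOn g I) (hhc : ContinuousOn h I)
  (hgm : StrictMonoOn g I) (hhm : StrictMonoOn h I)
include hI hx₀ hright hgc hhc hgm hhm

lemma sub_right_isBigO_sub_left_of_qamLE (hle : qamLE I g h) :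
    (fun x ↦ h x - h x₀) =O[𝓝[>] x₀] fun x ↦ g x - g x₀ := by
  obtain ⟨y, hy, hxy⟩ : ∃ y ∈ I, x₀ < y := nonempty_of_mem (inter_mem hright self_mem_nhdsWithin)
  refine isBigO_sub_of_forall_nat_mul_lt hx₀ hright hgc hgm hhm
    (sub_pos.2 (hgm hx₀ hy hxy)) (B := h y - h x₀) fun x hx _ n hn ↦ ?_
  cases n with
  | zero => simpa using (hhm hx₀ hy hxy).le
  | succ n =>
    push_cast at hn ⊢
    linarith [mul_le_add_mul_of_qamLE hI hgc hhc hgm hhm hle hx hx₀ hy (n := n) (by linarith)]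

lemma sub_left_isBigO_sub_right_of_qamLE {z : ℝ} (hz : z ∈ I) (hzx : z < x₀)
    (hle : qamLE I g h) : (fun x ↦ g x - g x₀) =O[𝓝[>] x₀] fun x ↦ h x - h x₀ := by
  refine isBigO_sub_of_forall_nat_mul_lt hx₀ hright hhc hhm hgm
    (sub_pos.2 (hhm hz hx₀ hzx)) (B := g x₀ - g z) fun x hx _ n ↦ ?_
  contrapose!
  intro hn
  linarith [mul_le_add_mul_of_qamLE hI hgc hhc hgm hhm hle hx₀ hx hz (n := n) (by linarith)]

end Comparison

theorem isTheta_sub_of_qamLE {I : Set ℝ} (hI : I.OrdConnected) {x₀ : ℝ} (hx₀ : x₀ ∈ interior I)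
    {g h : ℝ → ℝ} (hgc : ContinuousOn g I) (hhc : ContinuousOn h I)
    (hgm : StrictMonoOrAntiOn g I) (hhm : StrictMonoOrAntiOn h I) (hle : qamLE I g h) :
    (fun x ↦ h x - h x₀) =Θ[𝓝[>] x₀] fun x ↦ g x - g x₀ := by
  wlog hg : StrictMonoOn g I generalizing g
  · have hneg : StrictMonoOn (-g) I := (hgm.resolve_left hg).neg
    have hΘ := this hgc.neg (.inl hneg) (qamLE_neg_left.2 hle) hneg
    simpa only [IsTheta, Pi.neg_apply, ← neg_sub', isBigO_neg_left, isBigO_neg_right] using hΘ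
  wlog hh : StrictMonoOn h I generalizing h
  · have hneg : StrictMonoOn (-h) I := (hhm.resolve_left hh).neg
    have hΘ := this hhc.neg (.inl hneg) (qamLE_neg_right.2 hle) hneg
    simpa only [IsTheta, Pi.neg_apply, ← neg_sub', isBigO_neg_left, isBigO_neg_right] using hΘ
  have hmem : x₀ ∈ I := interior_subset hx₀
  have hnhds : I ∈ 𝓝 x₀ := mem_interior_iff_mem_nhds.1 hx₀
  have hright : I ∈ 𝓝[>] x₀ := mem_nhdsWithin_of_mem_nhds hnhds
  obtain ⟨z, hzx, hz⟩ : ∃ z < x₀, z ∈ I :=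
    nonempty_of_mem (inter_mem_nhdsWithin (Iio x₀) hnhds)
  exact ⟨sub_right_isBigO_sub_left_of_qamLE hI hmem hright hgc hhc hg hh hle,
    sub_left_isBigO_sub_right_of_qamLE hI hmem hright hgc hhc hg hh hz hzx hle⟩

lemma hasDerivWithinAt_zero_of_isBigO_sub {𝕜 E F : Type*} [NontriviallyNormedField 𝕜]
    [NormedAddCommGroup E] [NormedSpace 𝕜 E] [NormedAddCommGroup F] [NormedSpace 𝕜 F]
    {f : 𝕜 → E} {g : 𝕜 → F} {s : Set 𝕜} {x : 𝕜} (hg : HasDerivWithinAt g 0 s x)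
    (hfg : (fun y ↦ f y - f x) =O[𝓝[s] x] fun y ↦ g y - g x) : HasDerivWithinAt f 0 s x := by
  rw [hasDerivWithinAt_iff_isLittleO] at hg ⊢
  simp only [smul_zero, sub_zero] at hg ⊢
  exact hfg.trans_isLittleO hg

theorem not_comparable_of_right_deriv_zero_nonzero_general
    (I : Set ℝ) (hI : I.OrdConnected) (x₀ : ℝ) (hx₀ : x₀ ∈ interior I) (g h : ℝ → ℝ)
    (hgc : ContinuousOn g I) (hhc : ContinuousOn h I)
    (hgm : StrictMonoOrAntiOn g I) (hhm : StrictMonoOrAntiOn h I)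
    (hgh : ¬ (fun x ↦ h x - h x₀) =Θ[𝓝[>] x₀] fun x ↦ g x - g x₀) :
    ¬ qamLE I g h ∧ ¬ qamLE I h g :=
  ⟨fun hle ↦ hgh (isTheta_sub_of_qamLE hI hx₀ hgc hhc hgm hhm hle),
    fun hle ↦ hgh (isTheta_sub_of_qamLE hI hx₀ hhc hgc hhm hgm hle).symm⟩

/-- Lemma 1: if, at an interior point `x₀`, `g'₊(x₀) = 0` and
`h'₊(x₀) ≠ 0`, then `A^[g]` and `A^[h]` are not comparable. -/
theorem not_comparable_of_right_deriv_zero_nonzero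
    (I : Set ℝ) (hI : I.OrdConnected) (hInontriv : ∃ x ∈ I, ∃ y ∈ I, x < y)
    (x₀ : ℝ) (hx₀ : x₀ ∈ interior I)
    (g h : ℝ → ℝ)
    (hgc : ContinuousOn g I) (hhc : ContinuousOn h I)
    (hgm : StrictMonoOrAntiOn g I) (hhm : StrictMonoOrAntiOn h I)
    (hgd : HasDerivWithinAt g 0 (Ioi x₀) x₀)
    (d : ℝ) (hd : d ≠ 0) (hhd : HasDerivWithinAt h d (Ioi x₀) x₀) :
    ¬ qamLE I g h ∧ ¬ qamLE I h g :=
  not_comparable_of_right_deriv_zero_nonzero_general I hI x₀ hx₀ g h hgc hhc hgm hhm fun hΘ ↦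
    hd <| (uniqueDiffWithinAt_Ioi x₀).eq_deriv _ hhd (hasDerivWithinAt_zero_of_isBigO_sub hgd hΘ.1)
end
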